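/- Assume γ<0, 1<ν/δ<2, and that L(x)=ℓ(x)/𝓛(x) satisfies L(x)=|γ|·(1+O(ℓ(x)/x^δ)) as x→∞. Then the function u ↦ g(u)/f(u) + |γ|·(1−u)^{−(1+|γ|)} is absolutely integrable on [0,1); consequently B(s) := exp( ∫_s^1 [ g(u)/f(u) + |γ|·(1−u)^{−(1+|γ|)} ] du ) is well defined and bounded for s∈[0,1), and B(s)→1 as s↑1. -/

import Mathlib

open Real Filter Asymptotics Set MeasureTheory

open scoped Topology

/-! With `x = 1 / (1 - u)` the integrand equals `(1 - u) ^ (δ - ν - 1) * (|γ| - ℓ x / 𝓛 x)`, because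
`|γ| = ν - δ`. Slow variation gives `ℓ x = O(x ^ ε)` for every `ε > 0`, so the hypothesis on
`ℓ / 𝓛` makes the integrand `O((1 - u) ^ (2 * δ - ν - 1 - ε))` at `1`. Since `ν < 2 * δ`, a small
`ε` makes this exponent larger than `-1`, which is integrability. -/

/-- Slow variation at infinity in the sense of Karamata. No positivity is built in; the ratio
tending to `1` rules out the junk value `l (a * x) / 0 = 0` for large `x`. -/
def IsSlowlyVarying (l : ℝ → ℝ) : Prop :=
  ∀ a > 0, Tendsto (fun x => l (a * x) / l x) atTop (𝓝 1)

theorem bddAbove_image_Ici_of_dilation_le {K β : Type*} [Field K] [LinearOrder K]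
    [IsStrictOrderedRing K] [Archimedean K] [Preorder β] {q : K → β} {a r : K} (ha : 1 < a)
    (hr : 0 < r) (hq : ∀ x, r ≤ x → q (a * x) ≤ q x) (hbdd : BddAbove (q '' Icc r (a * r))) :
    BddAbove (q '' Ici r) := by
  obtain ⟨M, hM⟩ := hbdd
  have ha0 : 0 < a := one_pos.trans ha
  have q_pow_mul_le (n : ℕ) {y : K} (hy : r ≤ y) : q (a ^ n * y) ≤ q y := by
    induction n with
    | zero => simp
    | succ n ih =>
      rw [pow_succ', mul_assoc]
      exact (hq _ (hy.trans (le_mul_of_one_le_left (hr.le.trans hy) (one_le_pow₀ ha.le)))).trans ih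
  refine ⟨M, forall_mem_image.2 fun x (hx : r ≤ x) => ?_⟩
  obtain ⟨n, hn, hn'⟩ := exists_nat_pow_near ((one_le_div hr).2 hx) ha
  have han : 0 < a ^ n := pow_pos ha0 n
  have hlow : r ≤ x / a ^ n := by
    rw [le_div_iff₀ han, mul_comm]
    exact (le_div_iff₀ hr).1 hn
  have hupp : x / a ^ n ≤ a * r := by
    rw [div_le_iff₀ han, mul_right_comm, ← pow_succ']
    exact (div_le_iff₀ hr).1 hn'.le
  calc q x = q (a ^ n * (x / a ^ n)) := by rw [mul_div_cancel₀ _ han.ne']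
    _ ≤ q (x / a ^ n) := q_pow_mul_le n hlow
    _ ≤ M := hM (mem_image_of_mem q ⟨hlow, hupp⟩)

theorem isBigO_rpow_of_norm_dilation_le {E : Type*} [SeminormedAddCommGroup E] {l : ℝ → E}
    {a e r : ℝ} (ha : 1 < a) (hcont : ContinuousOn l (Ici r))
    (hl : ∀ᶠ x in atTop, ‖l (a * x)‖ ≤ a ^ e * ‖l x‖) : l =O[atTop] fun x => x ^ e := by
  have ha0 : 0 < a := one_pos.trans ha
  obtain ⟨R, hR⟩ := eventually_atTop.1
    (hl.and ((eventually_ge_atTop r).and (eventually_gt_atTop 0)))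
  have hR0 : 0 < R := (hR R le_rfl).2.2
  have hcont' : ContinuousOn (fun x => ‖l x‖ / x ^ e) (Icc R (a * R)) :=
    (hcont.mono fun x hx => (hR x hx.1).2.1).norm.div
      (continuousOn_id.rpow_const fun x hx => .inl (hR x hx.1).2.2.ne')
      fun x hx => (rpow_pos_of_pos (hR x hx.1).2.2 e).ne'
  have hanti (x : ℝ) (hx : R ≤ x) : ‖l (a * x)‖ / (a * x) ^ e ≤ ‖l x‖ / x ^ e := by
    obtain ⟨hlx, -, hx0⟩ := hR x hx
    rw [mul_rpow ha0.le hx0.le, ← mul_div_mul_left ‖l x‖ _ (rpow_pos_of_pos ha0 e).ne']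
    gcongr
  obtain ⟨M, hM⟩ := bddAbove_image_Ici_of_dilation_le ha hR0 hanti
    (isCompact_Icc.bddAbove_image hcont')
  refine .of_bound M (eventually_atTop.2 ⟨R, fun x hx => ?_⟩)
  have hpow : 0 < x ^ e := rpow_pos_of_pos (hR x hx).2.2 e
  rw [norm_of_nonneg hpow.le, ← div_le_iff₀ hpow]
  exact hM (mem_image_of_mem _ hx)

theorem IsSlowlyVarying.isBigO_rpow {l : ℝ → ℝ} {e r : ℝ} (hl : IsSlowlyVarying l)
    (hcont : ContinuousOn l (Ici r)) (he : 0 < e) : l =O[atTop] fun x => x ^ e := by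
  have hratio : Tendsto (fun x => l (2 * x) / l x) atTop (𝓝 1) := hl 2 two_pos
  have hlt : ∀ᶠ x in atTop, ‖l (2 * x) / l x‖ < 2 ^ e :=
    hratio.norm.eventually_lt_const (by simpa using one_lt_rpow one_lt_two he)
  refine isBigO_rpow_of_norm_dilation_le one_lt_two hcont ?_
  filter_upwards [hlt, hratio.eventually_ne one_ne_zero] with x hx hne
  have hlx : 0 < ‖l x‖ := norm_pos_iff.2 (div_ne_zero_iff.1 hne).2
  rw [norm_div, div_lt_iff₀ hlx] at hx
  exact hx.le

theorem integrableOn_Ico_of_isBigO_nhdsLT {α E F : Type*} [LinearOrder α] [TopologicalSpace α]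
    [OrderTopology α] [SecondCountableTopology α] [CompactIccSpace α]
    [MeasurableSpace α] [OpensMeasurableSpace α] [NormedAddCommGroup E] [NormedAddCommGroup F]
    {μ : Measure α} {f : α → E} {g : α → F} {a b : α} (hf : LocallyIntegrableOn f (Ico a b) μ)
    (hfg : f =O[𝓝[<] b] g) (hg : IntegrableAtFilter g (𝓝[<] b) μ) : IntegrableOn f (Ico a b) μ := by
  rcases le_or_gt b a with hba | hab
  · simp [Ico_eq_empty_of_le hba]
  obtain ⟨s, hs, hfs⟩ := hfg.integrableAtFilter
    ⟨Ico a b, Ico_mem_nhdsLT hab, hf.aestronglyMeasurable⟩ hg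
  obtain ⟨c, hc, hcs⟩ := (mem_nhdsLT_iff_exists_mem_Ico_Ioo_subset hab).1 hs
  have hfc : IntegrableOn f (Icc a c) μ :=
    hf.integrableOn_compact_subset (Icc_subset_Ico_right hc.2) isCompact_Icc
  rw [← Icc_union_Ioo_eq_Ico hc.1 hc.2]
  exact hfc.union (hfs.mono_set hcs)

theorem integrableAtFilter_sub_rpow_nhdsLT {b p : ℝ} (hp : -1 < p) :
    IntegrableAtFilter (fun u => (b - u) ^ p) (𝓝[<] b) := by
  refine ⟨Ioo (b - 1) b, Ioo_mem_nhdsLT (by linarith), ?_⟩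
  have hint : IntervalIntegrable (fun u => (b - u) ^ p) volume b (b - 1) := by
    simpa only [sub_zero] using
      (intervalIntegral.intervalIntegrable_rpow' (a := 0) (b := 1) hp).comp_sub_left b
  exact (intervalIntegrable_iff_integrableOn_Ioo_of_le (by linarith)).1 hint.symm

theorem tendsto_one_div_one_sub_nhdsLT :
    Tendsto (fun u : ℝ => 1 / (1 - u)) (𝓝[<] 1) atTop := by
  simp only [one_div]
  refine tendsto_inv_nhdsGT_zero.comp (tendsto_nhdsWithin_iff.2 ⟨?_, ?_⟩)
  · exact (Continuous.tendsto' (by fun_prop) 1 0 (sub_self 1)).mono_left nhdsWithin_le_nhds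
  · filter_upwards [self_mem_nhdsWithin] with u (hu : u < 1) using sub_pos.2 hu

theorem integrableOn_one_sub_rpow_smul_comp_one_div {E : Type*} [NormedAddCommGroup E]
    [NormedSpace ℝ E] {h : ℝ → E} {p q : ℝ} (hcont : ContinuousOn h (Ici 1))
    (hh : h =O[atTop] fun x => x ^ q) (hpq : q < p + 1) :
    IntegrableOn (fun u => (1 - u) ^ p • h (1 / (1 - u))) (Ico 0 1) := by
  have hne : ∀ u ∈ Ico (0 : ℝ) 1, 1 - u ≠ 0 := fun u hu => (sub_pos.2 hu.2).ne'
  have hsub : ContinuousOn (fun u : ℝ => 1 - u) (Ico 0 1) := by fun_prop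
  have hmaps : MapsTo (fun u : ℝ => 1 / (1 - u)) (Ico 0 1) (Ici 1) := fun u hu =>
    (one_le_div (sub_pos.2 hu.2)).2 (sub_le_self 1 hu.1)
  have hfcont : ContinuousOn (fun u => (1 - u) ^ p • h (1 / (1 - u))) (Ico 0 1) :=
    (hsub.rpow_const fun u hu => .inl (hne u hu)).smul
      (hcont.comp (continuousOn_const.div hsub hne) hmaps)
  have hbigO : (fun u => (1 - u) ^ p • h (1 / (1 - u))) =O[𝓝[<] 1]
      fun u => (1 - u) ^ (p - q) := by
    refine ((isBigO_refl (fun u : ℝ => (1 - u) ^ p) _).smul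
      (hh.comp_tendsto tendsto_one_div_one_sub_nhdsLT)).congr' .rfl ?_
    filter_upwards [self_mem_nhdsWithin] with u hu
    have hu0 : 0 < 1 - u := sub_pos.2 hu
    simp only [Function.comp_apply, smul_eq_mul, one_div]
    rw [inv_rpow hu0.le, rpow_sub hu0, div_eq_mul_inv]
  exact integrableOn_Ico_of_isBigO_nhdsLT (hfcont.locallyIntegrableOn measurableSet_Ico)
    hbigO (integrableAtFilter_sub_rpow_nhdsLT (by linarith))

section TailIntegral

variable {E : Type*} [NormedAddCommGroup E] [NormedSpace ℝ E] {μ : Measure ℝ}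
  [NullSingletonClass μ] {f : ℝ → E} {a b : ℝ}

theorem norm_intervalIntegral_le_setIntegral_Ico (hf : IntegrableOn f (Ico a b) μ) {s : ℝ}
    (hs : s ∈ Ico a b) : ‖∫ u in s..b, f u ∂μ‖ ≤ ∫ u in Ico a b, ‖f u‖ ∂μ := by
  rw [intervalIntegral.integral_of_le hs.2.le, ← integral_Ico_eq_integral_Ioc]
  exact (norm_integral_le_integral_norm f).trans (setIntegral_mono_set hf.norm
    (.of_forall fun u => norm_nonneg (f u)) (Ico_subset_Ico_left hs.1).eventuallyLE)

theorem tendsto_intervalIntegral_nhdsLT_zero (hab : a < b) (hf : IntegrableOn f (Ico a b) μ) :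
    Tendsto (fun s => ∫ u in s..b, f u ∂μ) (𝓝[<] b) (𝓝 0) := by
  have hf' : IntegrableOn f (uIcc a b) μ := by
    rwa [uIcc_of_le hab.le, integrableOn_Icc_iff_integrableOn_Ico]
  have hcont := intervalIntegral.continuousOn_primitive_interval_left hf' b right_mem_uIcc
  rw [ContinuousWithinAt, intervalIntegral.integral_same, uIcc_of_le hab.le] at hcont
  exact hcont.mono_left (nhdsWithin_le_of_mem (mem_of_superset (Ico_mem_nhdsLT hab)
    Ico_subset_Icc_self))

end TailIntegral

/-- The integrand `g / f + c * (1 - u) ^ (γ - 1)` with `γ = δ - ν`; the theorem is the case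
`c = |γ|`, where `γ < 0` turns the exponent into `-(1 + |γ|)`. -/
noncomputable def compensatedRatio (ν δ c : ℝ) (𝓛 ℓ : ℝ → ℝ) (u : ℝ) : ℝ :=
  -(1 - u) ^ δ * ℓ (1 / (1 - u)) / ((1 - u) ^ (1 + ν) * 𝓛 (1 / (1 - u))) +
    c * (1 - u) ^ (δ - ν - 1)

theorem compensatedRatio_eq_rpow_mul (ν δ c : ℝ) (𝓛 ℓ : ℝ → ℝ) {u : ℝ} (hu : u < 1) :
    compensatedRatio ν δ c 𝓛 ℓ u =
      -((1 - u) ^ (δ - ν - 1) * (ℓ (1 / (1 - u)) / 𝓛 (1 / (1 - u)) - c)) := by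
  have hpow : (1 - u) ^ (δ - ν - 1) = (1 - u) ^ δ / (1 - u) ^ (1 + ν) := by
    rw [← rpow_sub (sub_pos.2 hu), sub_sub, add_comm ν]
  rw [compensatedRatio, hpow]
  ring

theorem integrableOn_compensatedRatio {ν δ c : ℝ} (hνδ : ν < 2 * δ) {𝓛 ℓ : ℝ → ℝ}
    (h𝓛ne : ∀ x ∈ Ici (1 : ℝ), 𝓛 x ≠ 0) (h𝓛cont : ContinuousOn 𝓛 (Ici 1))
    (hℓcont : ContinuousOn ℓ (Ici 1)) (hℓsv : IsSlowlyVarying ℓ)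
    (hLc : (fun x => ℓ x / 𝓛 x - c) =O[atTop] fun x => ℓ x / x ^ δ) :
    IntegrableOn (compensatedRatio ν δ c 𝓛 ℓ) (Ico 0 1) := by
  obtain ⟨e, he0, he⟩ : ∃ e, 0 < e ∧ e < 2 * δ - ν := exists_between (sub_pos.2 hνδ)
  have hdecay : (fun x => ℓ x / 𝓛 x - c) =O[atTop] fun x => x ^ (e - δ) := by
    refine (hLc.trans ((hℓsv.isBigO_rpow hℓcont he0).mul
      (isBigO_refl (fun x : ℝ => (x ^ δ)⁻¹) atTop))).congr' .rfl ?_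
    filter_upwards [eventually_gt_atTop 0] with x hx
    rw [rpow_sub hx, div_eq_mul_inv]
  have hint : IntegrableOn (fun u => (1 - u) ^ (δ - ν - 1) •
      (ℓ (1 / (1 - u)) / 𝓛 (1 / (1 - u)) - c)) (Ico 0 1) :=
    integrableOn_one_sub_rpow_smul_comp_one_div
      ((hℓcont.div h𝓛cont h𝓛ne).sub continuousOn_const) hdecay (by linarith)
  exact hint.neg.congr_fun (fun u hu => (compensatedRatio_eq_rpow_mul ν δ c 𝓛 ℓ hu.2).symm)
    measurableSet_Ico

theorem stmt15_general {ν δ c : ℝ} (hνδ : ν < 2 * δ) {𝓛 ℓ : ℝ → ℝ}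
    (h𝓛ne : ∀ x ∈ Ici (1 : ℝ), 𝓛 x ≠ 0) (h𝓛cont : ContinuousOn 𝓛 (Ici 1))
    (hℓcont : ContinuousOn ℓ (Ici 1)) (hℓsv : IsSlowlyVarying ℓ)
    (hLc : (fun x => ℓ x / 𝓛 x - c) =O[atTop] fun x => ℓ x / x ^ δ) :
    IntegrableOn (compensatedRatio ν δ c 𝓛 ℓ) (Ico 0 1) ∧
    (∃ C : ℝ, ∀ s ∈ Ico (0 : ℝ) 1, exp (∫ u in s..1, compensatedRatio ν δ c 𝓛 ℓ u) ≤ C) ∧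
    Tendsto (fun s => exp (∫ u in s..1, compensatedRatio ν δ c 𝓛 ℓ u)) (𝓝[<] 1) (𝓝 1) := by
  have hint : IntegrableOn (compensatedRatio ν δ c 𝓛 ℓ) (Ico 0 1) :=
    integrableOn_compensatedRatio hνδ h𝓛ne h𝓛cont hℓcont hℓsv hLc
  refine ⟨hint, ⟨exp (∫ u in Ico 0 1, ‖compensatedRatio ν δ c 𝓛 ℓ u‖), fun s hs => ?_⟩, ?_⟩
  · exact exp_le_exp.2
      ((le_abs_self _).trans (norm_intervalIntegral_le_setIntegral_Ico hint hs))
  · simpa only [exp_zero] using (tendsto_intervalIntegral_nhdsLT_zero one_pos hint).rexp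

theorem stmt15
    (ν δ γ : ℝ) (hν0 : 0 < ν) (hν1 : ν < 1) (hδ0 : 0 < δ) (hδ1 : δ < 1)
    (hγ : γ = δ - ν)
    (hγneg : γ < 0)
    (𝓛 ℓ : ℝ → ℝ)
    (h𝓛pos : ∀ x ∈ Ici (1:ℝ), 0 < 𝓛 x) (hℓpos : ∀ x ∈ Ici (1:ℝ), 0 < ℓ x)
    (h𝓛cont : ContinuousOn 𝓛 (Ici 1)) (hℓcont : ContinuousOn ℓ (Ici 1))
    (h𝓛sv : ∀ lam > (0:ℝ), Tendsto (fun x => 𝓛 (lam * x) / 𝓛 x) atTop (nhds 1))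
    (hℓsv : ∀ lam > (0:ℝ), Tendsto (fun x => ℓ (lam * x) / ℓ x) atTop (nhds 1))
    (hr1 : 1 < ν / δ) (hr2 : ν / δ < 2)
    (hLgam : (fun x => ℓ x / 𝓛 x - |γ|) =O[atTop] fun x => ℓ x / x ^ δ)
 :
    IntegrableOn (fun u => (-(1 - u) ^ δ * ℓ (1 / (1 - u))) / ((1 - u) ^ (1 + ν) * 𝓛 (1 / (1 - u))) + |γ| * (1 - u) ^ (-(1 + |γ|))) (Ico (0:ℝ) 1) ∧
    (∃ C : ℝ, ∀ s ∈ Ico (0:ℝ) 1, Real.exp (∫ u in s..(1:ℝ), (-(1 - u) ^ δ * ℓ (1 / (1 - u))) / ((1 - u) ^ (1 + ν) * 𝓛 (1 / (1 - u))) + |γ| * (1 - u) ^ (-(1 + |γ|))) ≤ C) ∧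
    Tendsto (fun s => Real.exp (∫ u in s..(1:ℝ), (-(1 - u) ^ δ * ℓ (1 / (1 - u))) / ((1 - u) ^ (1 + ν) * 𝓛 (1 / (1 - u))) + |γ| * (1 - u) ^ (-(1 + |γ|)))) (nhdsWithin 1 (Iio 1)) (nhds 1) := by
  rw [show -(1 + |γ|) = δ - ν - 1 by rw [abs_of_neg hγneg, hγ]; ring]
  exact stmt15_general ((div_lt_iff₀ hδ0).1 hr2) (fun x hx => (h𝓛pos x hx).ne') h𝓛cont hℓcont
    hℓsv hLgam
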